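/- Let (S,d) be a geodesic δ-hyperbolic metric space with basepoint e and let x,y be two points of the Gromov boundary ∂S. Then for every K > 0, every u₁,u₂ ∈ U_{K+6δ}(x), every v₁,v₂ ∈ U_{K+6δ}(y), and all geodesic segments [u₁,v₁] and [u₂,v₂], the set [u₁,v₁] ∩ B(e,K) is contained in the 2δ-neighborhood of [u₂,v₂], where B(e,K) is the open ball of radius K centered at e. -/

import Mathlib

/-!
Cut the quadrilateral with vertices `u₁, v₁, v₂, u₂` along the diagonal `[v₁, u₂]`: a point of
`[u₁, v₁]` is `2δ`-close to `[u₂, v₂]` unless it is `2δ`-close to `[u₂, u₁]` or `[v₂, v₁]`.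
Those two sides lie far from `e`. Indeed, a point `s` far along a sequence tending to `x` has large
Gromov product with both `u₂` and `u₁`, a geodesic avoids the open ball about `e` whose radius is
the Gromov product of its endpoints, and `[u₂, u₁]` is `δ`-close to `[u₂, s] ∪ [s, u₁]`.
The three uses of slimness cost `3δ` in total.
-/

/-- A geodesic segment from `u` to `v`: the image of an isometric embedding of
`[0, dist u v]` sending the endpoints to `u` and `v`. -/
def IsGeodesicSegment {S : Type*} [MetricSpace S] (Γ : Set S) (u v : S) : Prop :=
  ∃ γ : ℝ → S, γ 0 = u ∧ γ (dist u v) = v ∧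
    (∀ s ∈ Set.Icc (0 : ℝ) (dist u v), ∀ t ∈ Set.Icc (0 : ℝ) (dist u v),
      dist (γ s) (γ t) = |s - t|) ∧
    Γ = γ '' Set.Icc (0 : ℝ) (dist u v)

/-- A geodesic metric space: every pair of points is joined by a geodesic segment. -/
def GeodesicSpace (S : Type*) [MetricSpace S] : Prop :=
  ∀ u v : S, ∃ Γ : Set S, IsGeodesicSegment Γ u v

/-- `δ`-hyperbolicity: every geodesic triangle is `δ`-slim. -/
def DeltaHyperbolic (S : Type*) [MetricSpace S] (δ : ℝ) : Prop :=
  ∀ x y z : S, ∀ Γ₁ Γ₂ Γ₃ : Set S,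
    IsGeodesicSegment Γ₁ x y → IsGeodesicSegment Γ₂ y z → IsGeodesicSegment Γ₃ z x →
    ∀ p ∈ Γ₁, Metric.infDist p (Γ₂ ∪ Γ₃) ≤ δ

/-- The Gromov product of `x` and `y` with respect to the basepoint `e`. -/
noncomputable def gprod {S : Type*} [MetricSpace S] (e x y : S) : ℝ :=
  (dist x e + dist y e - dist x y) / 2

/-- A sequence converges to infinity if its pairwise Gromov products tend to infinity. -/
def ConvToInfty {S : Type*} [MetricSpace S] (e : S) (s : ℕ → S) : Prop :=
  Filter.Tendsto (fun p : ℕ × ℕ => gprod e (s p.1) (s p.2)) Filter.atTop Filter.atTop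

/-- The type of sequences in `S` converging to infinity. -/
def BSeq (S : Type*) [MetricSpace S] (e : S) := {s : ℕ → S // ConvToInfty e s}

/-- Two sequences converging to infinity are equivalent if their mutual Gromov
products tend to infinity. -/
def bequiv {S : Type*} [MetricSpace S] (e : S) (s t : BSeq S e) : Prop :=
  Filter.Tendsto (fun n => gprod e (s.1 n) (t.1 n)) Filter.atTop Filter.atTop

/-- The Gromov boundary of `S` with respect to the basepoint `e`. -/
def GBoundary (S : Type*) [MetricSpace S] (e : S) := Quot (bequiv (S := S) e)

/-- A sequence in `S` tends to the boundary point `x`. -/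
def TendstoBd {S : Type*} [MetricSpace S] (e : S) (s : ℕ → S) (x : GBoundary S e) : Prop :=
  ∃ h : ConvToInfty e s, Quot.mk _ (⟨s, h⟩ : BSeq S e) = x

/-- The Gromov product of a point `u ∈ S` with a boundary point `x`:
the infimum over sequences tending to `x` of the liminf of Gromov products. -/
noncomputable def gprodSB {S : Type*} [MetricSpace S] (e u : S) (x : GBoundary S e) : EReal :=
  sInf {r : EReal | ∃ s : ℕ → S, TendstoBd e s x ∧
    r = Filter.liminf (fun n => (gprod e u (s n) : EReal)) Filter.atTop}

/-- The Gromov product of two boundary points. -/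
noncomputable def gprodBB {S : Type*} [MetricSpace S] (e : S) (x y : GBoundary S e) : EReal :=
  sInf {r : EReal | ∃ s t : ℕ → S, TendstoBd e s x ∧ TendstoBd e t y ∧
    r = Filter.liminf (fun p : ℕ × ℕ => (gprod e (s p.1) (t p.2) : EReal)) Filter.atTop}

/-- `UK e K x = {s ∈ S | (x·s)_e > K}`. -/
def UK {S : Type*} [MetricSpace S] (e : S) (K : ℝ) (x : GBoundary S e) : Set S :=
  {u : S | (K : EReal) < gprodSB e u x}

/-- `d'(x,y) = exp (−ζ (x·y)_e)` on the boundary (equal to `0` when the product is `∞`). -/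
noncomputable def dExp {S : Type*} [MetricSpace S] (e : S) (ζ : ℝ) (x y : GBoundary S e) : ℝ :=
  if gprodBB e x y = ⊤ then 0 else Real.exp (-ζ * (gprodBB e x y).toReal)

/-- The chain metric `ρ(x,y) = inf Σ d'(s_k, s_{k+1})` over finite chains from `x` to `y`. -/
noncomputable def rhoChain {S : Type*} [MetricSpace S] (e : S) (ζ : ℝ)
    (x y : GBoundary S e) : ℝ :=
  sInf {r : ℝ | ∃ (n : ℕ) (c : ℕ → GBoundary S e), c 0 = x ∧ c n = y ∧
    r = ∑ k ∈ Finset.range n, dExp e ζ (c k) (c (k + 1))}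

/-- `ρ` is a metric. -/
def IsMetricFn {B : Type*} (ρ : B → B → ℝ) : Prop :=
  (∀ x y, 0 ≤ ρ x y) ∧ (∀ x y, ρ x y = 0 ↔ x = y) ∧ (∀ x y, ρ x y = ρ y x) ∧
  ∀ x y z, ρ x z ≤ ρ x y + ρ y z

/-- `ζ` is a suitable visual parameter: `ζ > 0`, the associated chain function `ρ` is a
metric on the boundary, and `d'/2 ≤ ρ ≤ d'`. -/
def VisualParam {S : Type*} [MetricSpace S] (e : S) (ζ : ℝ) : Prop :=
  0 < ζ ∧ IsMetricFn (rhoChain e ζ) ∧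
  ∀ x y : GBoundary S e, dExp e ζ x y / 2 ≤ rhoChain e ζ x y ∧ rhoChain e ζ x y ≤ dExp e ζ x y

/-- The topology on the Gromov boundary induced by the visual metric `ρ`. -/
noncomputable def bdTopology (S : Type*) [MetricSpace S] (e : S) (ζ : ℝ) :
    TopologicalSpace (GBoundary S e) :=
  TopologicalSpace.generateFrom
    {B | ∃ (x : GBoundary S e) (ε : ℝ), 0 < ε ∧ B = {y | rhoChain e ζ x y < ε}}

section

variable {S : Type*} [MetricSpace S] {δ : ℝ}

namespace IsGeodesicSegment

variable {Γ : Set S} {u v p : S}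

lemma left_mem (h : IsGeodesicSegment Γ u v) : u ∈ Γ := by
  obtain ⟨γ, hγ₀, -, -, rfl⟩ := h
  exact ⟨0, ⟨le_rfl, dist_nonneg⟩, hγ₀⟩

lemma isCompact (h : IsGeodesicSegment Γ u v) : IsCompact Γ := by
  obtain ⟨γ, -, -, hγ, rfl⟩ := h
  have hlip : LipschitzOnWith 1 γ (Set.Icc 0 (dist u v)) :=
    LipschitzOnWith.of_dist_le_mul fun s hs t ht => by
      rw [NNReal.coe_one, one_mul, hγ s hs t ht, Real.dist_eq]
  exact isCompact_Icc.image_of_continuousOn hlip.continuousOn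

lemma dist_add_dist (h : IsGeodesicSegment Γ u v) (hp : p ∈ Γ) :
    dist u p + dist p v = dist u v := by
  obtain ⟨γ, hγ₀, hγ₁, hγ, rfl⟩ := h
  obtain ⟨t, ht, rfl⟩ := hp
  have hleft : dist u (γ t) = t := by
    rw [← hγ₀, hγ 0 ⟨le_rfl, dist_nonneg⟩ t ht, zero_sub, abs_neg, abs_of_nonneg ht.1]
  have hright : dist (γ t) v = dist u v - t := by
    nth_rw 1 [← hγ₁]
    rw [hγ t ht _ ⟨dist_nonneg, le_rfl⟩, abs_sub_comm, abs_of_nonneg (sub_nonneg.2 ht.2)]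
  rw [hleft, hright, add_sub_cancel]

lemma gprod_le_dist (h : IsGeodesicSegment Γ u v) (e : S) (hp : p ∈ Γ) :
    gprod e u v ≤ dist p e := by
  have hsplit := h.dist_add_dist hp
  have hu := dist_triangle u p e
  have hv := dist_triangle_left v e p
  rw [dist_comm v e, dist_comm e v] at hv
  unfold gprod
  linarith

end IsGeodesicSegment

lemma gprod_comm (e a b : S) : gprod e a b = gprod e b a := by
  rw [gprod, gprod, dist_comm a b, add_comm (dist a e)]

namespace DeltaHyperbolic

lemma exists_dist_le_of_triangle (hhyp : DeltaHyperbolic S δ) {a b c p : S} {Γ₁ Γ₂ Γ₃ : Set S}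
    (h₁ : IsGeodesicSegment Γ₁ a b) (h₂ : IsGeodesicSegment Γ₂ b c)
    (h₃ : IsGeodesicSegment Γ₃ c a) (hp : p ∈ Γ₁) : ∃ q ∈ Γ₂ ∪ Γ₃, dist p q ≤ δ := by
  obtain ⟨q, hq, hpq⟩ :=
    (h₂.isCompact.union h₃.isCompact).exists_infDist_eq_dist ⟨b, .inl h₂.left_mem⟩ p
  exact ⟨q, hq, hpq ▸ hhyp a b c Γ₁ Γ₂ Γ₃ h₁ h₂ h₃ p hp⟩

lemma exists_dist_le_of_quadrilateral (hhyp : DeltaHyperbolic S δ) (hgeo : GeodesicSpace S)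
    {a b a' b' p : S} {Γ Δ A B : Set S}
    (hΓ : IsGeodesicSegment Γ a b) (hΔ : IsGeodesicSegment Δ a' b')
    (hA : IsGeodesicSegment A a' a) (hB : IsGeodesicSegment B b' b) (hp : p ∈ Γ) :
    ∃ q ∈ Δ ∪ A ∪ B, dist p q ≤ 2 * δ := by
  obtain ⟨D, hD⟩ := hgeo b a'
  obtain ⟨q, hqD | hqA, hpq⟩ := hhyp.exists_dist_le_of_triangle hΓ hD hA hp
  · obtain ⟨r, hr, hqr⟩ := hhyp.exists_dist_le_of_triangle hD hΔ hB hqD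
    refine ⟨r, hr.imp_left .inl, ?_⟩
    linarith [dist_triangle p q r]
  · exact ⟨q, .inl (.inr hqA), by linarith [dist_nonneg (x := p) (y := q)]⟩

lemma min_gprod_le_dist_add (hhyp : DeltaHyperbolic S δ) (hgeo : GeodesicSpace S) {a b p : S}
    {Γ : Set S} (hΓ : IsGeodesicSegment Γ a b) (hp : p ∈ Γ) (e c : S) :
    min (gprod e a c) (gprod e b c) ≤ dist p e + δ := by
  obtain ⟨Γ₂, h₂⟩ := hgeo b c
  obtain ⟨Γ₃, h₃⟩ := hgeo c a
  obtain ⟨q, hq, hpq⟩ := hhyp.exists_dist_le_of_triangle hΓ h₂ h₃ hp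
  have hqe : dist q e ≤ dist p e + δ := by linarith [dist_triangle_left q e p]
  obtain hq₂ | hq₃ := hq
  · exact (min_le_right _ _).trans ((h₂.gprod_le_dist e hq₂).trans hqe)
  · rw [gprod_comm e a]
    exact (min_le_left _ _).trans ((h₃.gprod_le_dist e hq₃).trans hqe)

end DeltaHyperbolic

section UK

variable {e : S} {x : GBoundary S e}

lemma exists_tendstoBd (x : GBoundary S e) : ∃ s : ℕ → S, TendstoBd e s x := by
  obtain ⟨⟨s, hs⟩, rfl⟩ := Quot.exists_rep x
  exact ⟨s, hs, rfl⟩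

lemma UK_subset_UK {K L : ℝ} (hKL : K ≤ L) (x : GBoundary S e) : UK e L x ⊆ UK e K x :=
  fun _ hu => (EReal.coe_le_coe_iff.2 hKL).trans_lt hu

lemma TendstoBd.eventually_lt_gprod {s : ℕ → S} (hs : TendstoBd e s x) {u : S} {K : ℝ}
    (hu : u ∈ UK e K x) : ∀ᶠ n in Filter.atTop, K < gprod e u (s n) := by
  have hliminf : (K : EReal) < Filter.liminf (fun n => (gprod e u (s n) : EReal)) Filter.atTop :=
    lt_of_lt_of_le hu (sInf_le ⟨s, hs, rfl⟩)
  exact (Filter.eventually_lt_of_lt_liminf hliminf).mono fun _ => EReal.coe_lt_coe_iff.1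

lemma DeltaHyperbolic.lt_dist_add_of_mem_UK (hhyp : DeltaHyperbolic S δ) (hgeo : GeodesicSpace S)
    {K : ℝ} {a b p : S} (ha : a ∈ UK e K x) (hb : b ∈ UK e K x) {Γ : Set S}
    (hΓ : IsGeodesicSegment Γ a b) (hp : p ∈ Γ) : K < dist p e + δ := by
  obtain ⟨s, hs⟩ := exists_tendstoBd x
  obtain ⟨n, han, hbn⟩ := ((hs.eventually_lt_gprod ha).and (hs.eventually_lt_gprod hb)).exists
  exact (lt_min han hbn).trans_le (hhyp.min_gprod_le_dist_add hgeo hΓ hp e (s n))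

end UK

theorem statement18_general (hgeo : GeodesicSpace S) (hhyp : DeltaHyperbolic S δ) {e : S}
    {x y : GBoundary S e} {K : ℝ} {u₁ u₂ v₁ v₂ : S}
    (hu₁ : u₁ ∈ UK e (K + 3 * δ) x) (hu₂ : u₂ ∈ UK e (K + 3 * δ) x)
    (hv₁ : v₁ ∈ UK e (K + 3 * δ) y) (hv₂ : v₂ ∈ UK e (K + 3 * δ) y)
    {Γ Δ : Set S} (hΓ : IsGeodesicSegment Γ u₁ v₁) (hΔ : IsGeodesicSegment Δ u₂ v₂)
    {z : S} (hz : z ∈ Γ ∩ Metric.closedBall e K) : Metric.infDist z Δ ≤ 2 * δ := by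
  obtain ⟨A, hA⟩ := hgeo u₂ u₁
  obtain ⟨B, hB⟩ := hgeo v₂ v₁
  obtain ⟨q, hq, hzq⟩ := hhyp.exists_dist_le_of_quadrilateral hgeo hΓ hΔ hA hB hz.1
  have hqe : dist q e + δ ≤ K + 3 * δ := by
    linarith [dist_triangle_left q e z, Metric.mem_closedBall.1 hz.2]
  obtain (hqΔ | hqA) | hqB := hq
  · exact (Metric.infDist_le_dist_of_mem hqΔ).trans hzq
  · exact absurd (hhyp.lt_dist_add_of_mem_UK hgeo hu₂ hu₁ hA hqA) hqe.not_gt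
  · exact absurd (hhyp.lt_dist_add_of_mem_UK hgeo hv₂ hv₁ hB hqB) hqe.not_gt

end

/-- For boundary points `x, y` and every `K > 0`: if
`u₁, u₂ ∈ U_{K+6δ}(x)` and `v₁, v₂ ∈ U_{K+6δ}(y)`, then `[u₁,v₁] ∩ B(e,K)` lies in the
`2δ`-neighborhood of `[u₂,v₂]`. -/
theorem statement18 {S : Type*} [MetricSpace S] (δ : ℝ) (hδ : 0 ≤ δ)
    (hgeo : GeodesicSpace S) (hhyp : DeltaHyperbolic S δ) (e : S)
    (x y : GBoundary S e) :
    ∀ K : ℝ, 0 < K →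
      ∀ u₁ u₂ v₁ v₂ : S, u₁ ∈ UK e (K + 6 * δ) x → u₂ ∈ UK e (K + 6 * δ) x →
        v₁ ∈ UK e (K + 6 * δ) y → v₂ ∈ UK e (K + 6 * δ) y →
        ∀ Γ Δ : Set S, IsGeodesicSegment Γ u₁ v₁ → IsGeodesicSegment Δ u₂ v₂ →
          ∀ z ∈ Γ ∩ Metric.ball e K, Metric.infDist z Δ ≤ 2 * δ := by
  intro K _ u₁ u₂ v₁ v₂ hu₁ hu₂ hv₁ hv₂ Γ Δ hΓ hΔ z hz
  have hsub : ∀ ξ : GBoundary S e, UK e (K + 6 * δ) ξ ⊆ UK e (K + 3 * δ) ξ :=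
    UK_subset_UK (by linarith)
  exact statement18_general hgeo hhyp (hsub x hu₁) (hsub x hu₂) (hsub y hv₁) (hsub y hv₂) hΓ hΔ
    ⟨hz.1, Metric.ball_subset_closedBall hz.2⟩
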